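/- Let M ≥ 0, N ≥ 1, ℓ ∈ ℂ^N, k ∈ I_{M,N}, i ∈ {1,…,M}, r ∈ {1,…,N}, x ∈ ℂ and t ∈ ℂ^N. At every point where all theta factors in the denominators of u_{k;i}(x;t) and u_{k;i}(x;t+τe_r) are nonzero, one has u_{k;i}(x; t + τ e_r) = c · u_{k;i}(x; t), where c = 1 if r < k_i, c = e^{2(ξ₊+ξ₋−η) + 4(∑_{s>k_i} ℓ_s − M + i)η} if r = k_i, and c = e^{−4 ℓ_r η} if r > k_i; here e_r is the r-th standard basis vector of ℂ^N. -/

import Mathlib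

open Complex MeasureTheory

noncomputable section

namespace BQKZ

/-- `(z;p)_∞ = ∏_{m ≥ 0} (1 - z pᵐ)`; used with `p = q²`. -/
def poch (p z : ℂ) : ℂ := ∏' m : ℕ, (1 - z * p ^ m)

/-- renormalized Jacobi theta `θ(z) = (z;p)_∞ (p z⁻¹;p)_∞`, with `p = q²`. -/
def theta (p z : ℂ) : ℂ := poch p z * poch p (p * z⁻¹)

/-- `q² = e^{2τ}` where `q = e^τ`. -/
def qsq (τ : ℂ) : ℂ := exp (2 * τ)

/-- `ξ̃₊ = ξ₊ - η/2 - τ/2`. -/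
def xiP (τ η ξp : ℂ) : ℂ := ξp - η / 2 - τ / 2

/-- `ξ̃₋ = ξ₋ - η/2`. -/
def xiM (η ξm : ℂ) : ℂ := ξm - η / 2

/-- `n_k(r) = #{i : k i = r}`. -/
def nk {M N : ℕ} (k : Fin M → Fin N) (r : Fin N) : ℕ :=
  (Finset.univ.filter fun i => k i = r).card

/-- `φ_{k;r}`. -/
def phiC (η ξp ξm : ℂ) {N M : ℕ} (ℓ : Fin N → ℂ) (k : Fin M → Fin N) (r : Fin N) : ℂ :=
  (∏ i ∈ Finset.univ.filter fun i : Fin M => k i = r,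
      exp (2 * (η - ξp - ξm) +
        4 * ((M : ℂ) - ((i : ℕ) + 1) - ∑ s ∈ Finset.univ.filter fun s : Fin N => r ≤ s, ℓ s) * η)) *
    exp (-4 * ℓ r * η * ((Finset.univ.filter fun i : Fin M => r < k i).card : ℂ))

/-- `Φ_k(t)`. -/
def PhiF (τ η ξp ξm : ℂ) {N M : ℕ} (ℓ : Fin N → ℂ) (k : Fin M → Fin N) (t : Fin N → ℂ) : ℂ :=
  ∏ r, theta (qsq τ) (exp (2 * t r)) / theta (qsq τ) (phiC η ξp ξm ℓ k r * exp (2 * t r))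

/-- `F(x;t)`. -/
def Ffun (τ η : ℂ) {N : ℕ} (ℓ : Fin N → ℂ) (x : ℂ) (t : Fin N → ℂ) : ℂ :=
  ∏ s, (poch (qsq τ) (exp (-2 * (t s + x - ℓ s * η))) * poch (qsq τ) (exp (-2 * (t s - x - ℓ s * η)))) /
       (poch (qsq τ) (exp (-2 * (t s + x + ℓ s * η))) * poch (qsq τ) (exp (-2 * (t s - x + ℓ s * η))))

/-- `g(x)`. -/
def gfun (τ η ξp ξm : ℂ) (x : ℂ) : ℂ :=
  (poch (qsq τ) (qsq τ * exp (2 * (xiP τ η ξp - x))) * poch (qsq τ) (qsq τ * exp (2 * (xiM η ξm - x)))) /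
  (poch (qsq τ) (exp (2 * (-xiP τ η ξp - x))) * poch (qsq τ) (exp (2 * (-xiM η ξm - x))))

/-- `h(x)`. -/
def hfun (τ η : ℂ) (x : ℂ) : ℂ :=
  (1 - exp (-2 * x)) * poch (qsq τ) (qsq τ * exp (-2 * (x + η))) / poch (qsq τ) (exp (-2 * (x - η)))

/-- `ψ_{k;i}`. -/
def psiC (τ η ξp ξm : ℂ) {N M : ℕ} (ℓ : Fin N → ℂ) (k : Fin M → Fin N) (i : Fin M) : ℂ :=
  xiP τ η ξp + xiM η ξm + τ + ℓ (k i) * η +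
    2 * ((∑ s ∈ Finset.univ.filter fun s : Fin N => k i < s, ℓ s) - (M : ℂ) + ((i : ℕ) + 1)) * η

/-- `u_{k;i}(x;t)`. -/
def ufun (τ η ξp ξm : ℂ) {N M : ℕ} (ℓ : Fin N → ℂ) (k : Fin M → Fin N) (i : Fin M) (x : ℂ)
    (t : Fin N → ℂ) : ℂ :=
  exp (-t (k i)) * theta (qsq τ) (exp (2 * (x - t (k i) + psiC τ η ξp ξm ℓ k i))) *
    (∏ s ∈ Finset.univ.filter fun s : Fin N => k i < s,
      theta (qsq τ) (exp (2 * (x - t s - ℓ s * η)))) /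
    ∏ s ∈ Finset.univ.filter fun s : Fin N => k i ≤ s,
      theta (qsq τ) (exp (2 * (x - t s + ℓ s * η)))

/-- `w_k(x;t)/Φ_k(t)` (the weight function with the `Φ_k` prefactor cancelled). -/
def w0 (τ η ξp ξm : ℂ) {N M : ℕ} (ℓ : Fin N → ℂ) (k : Fin M → Fin N) (x : Fin M → ℂ)
    (t : Fin N → ℂ) : ℂ :=
  (∏ i, Ffun τ η ℓ (x i) t * gfun τ η ξp ξm (x i) * ufun τ η ξp ξm ℓ k i (x i) t) *
    ∏ p ∈ Finset.univ.filter fun p : Fin M × Fin M => p.1 < p.2,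
      hfun τ η (x p.1 + x p.2) * hfun τ η (x p.1 - x p.2)

/-- the weight function `w_k(x;t)`. -/
def wfun (τ η ξp ξm : ℂ) {N M : ℕ} (ℓ : Fin N → ℂ) (k : Fin M → Fin N) (x : Fin M → ℂ)
    (t : Fin N → ℂ) : ℂ :=
  PhiF τ η ξp ξm ℓ k t * w0 τ η ξp ξm ℓ k x t

/-- sign `ε_i = ±1` encoded by a boolean. -/
def sg {M : ℕ} (ε : Fin M → Bool) (i : Fin M) : ℂ := if ε i then 1 else -1

/-- `S_M k`: rearrangements of `k`. -/
def rearr {M N : ℕ} (k : Fin M → Fin N) : Finset (Fin M → Fin N) :=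
  Finset.univ.filter fun m => ∀ r, nk m r = nk k r

/-- `β_k(x;t)`, the coefficients of the boundary Bethe vectors. -/
def betaF (η ξm : ℂ) {N M : ℕ} (ℓ : Fin N → ℂ) (k : Fin M → Fin N) (x : Fin M → ℂ)
    (t : Fin N → ℂ) : ℂ :=
  exp ((∑ i, ((nk k (k i) : ℂ) / 2 - ℓ (k i))) * η) *
    ∑ m ∈ rearr k, ∑ ε : Fin M → Bool,
      (∏ i,
          sg ε i * sinh (sg ε i * x i - xiM η ξm) / sinh (t (m i) + sg ε i * x i - ℓ (m i) * η) *
            (∏ s ∈ Finset.univ.filter fun s : Fin N => m i < s,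
              sinh (t s + sg ε i * x i + ℓ s * η) / sinh (t s + sg ε i * x i - ℓ s * η)) *
            ∏ s, sinh (t s - sg ε i * x i + ℓ s * η) / sinh (t s - sg ε i * x i - ℓ s * η)) *
        (∏ p ∈ Finset.univ.filter fun p : Fin M × Fin M => p.1 < p.2,
          sinh (sg ε p.1 * x p.1 + sg ε p.2 * x p.2 + η) /
            sinh (sg ε p.1 * x p.1 + sg ε p.2 * x p.2)) *
        ∏ p ∈ Finset.univ.filter fun p : Fin M × Fin M => m p.1 < m p.2,
          sinh (sg ε p.1 * x p.1 - sg ε p.2 * x p.2 - η) /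
            sinh (sg ε p.1 * x p.1 - sg ε p.2 * x p.2)

/-- `(ℓ,η) ∈ D^k_{M,N}`. -/
def Dmn (η : ℂ) {N M : ℕ} (ℓ : Fin N → ℂ) (k : Fin M → Fin N) : Prop :=
  ∀ r, (ℓ r * η).re > max 0 (((nk k r : ℝ) - 1) / 2 * η.re)

/-- the (0-based) position `i_k(s;r) = ∑_{s' < r} n_k(s') + s`. -/
def blockIdx {M N : ℕ} (k : Fin M → Fin N) (r : Fin N) (s : ℕ) : ℕ :=
  (∑ s' ∈ Finset.univ.filter fun s' : Fin N => s' < r, nk k s') + s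

/-- `γ ∈ Γ^k_{M,N}`. -/
def Gam (η : ℂ) {N M : ℕ} (ℓ : Fin N → ℂ) (k : Fin M → Fin N) (γ : Fin M → ℂ) : Prop :=
  (∀ i, -(ℓ (k i) * η).re < (γ i).re ∧ (γ i).re < (ℓ (k i) * η).re) ∧
    ∀ r : Fin N, ∀ s : ℕ, s + 1 < nk k r →
      ∀ (h1 : blockIdx k r s < M) (h2 : blockIdx k r (s + 1) < M),
        (γ ⟨blockIdx k r (s + 1), h2⟩).re ≤ (γ ⟨blockIdx k r s, h1⟩).re ∧
          (γ ⟨blockIdx k r (s + 1), h2⟩).re + η.re < (γ ⟨blockIdx k r s, h1⟩).re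

/-- `γ ∈ Γ^k_{M,N;τ}`. -/
def GamTau (τ η : ℂ) {N M : ℕ} (ℓ : Fin N → ℂ) (k : Fin M → Fin N) (γ : Fin M → ℂ) : Prop :=
  Gam η ℓ k γ ∧
    (∀ i, -(ℓ (k i) * η + τ).re < (γ i).re ∧ (γ i).re < (ℓ (k i) * η + τ).re) ∧
    ∀ r : Fin N, ∀ s : ℕ, s + 1 < nk k r →
      ∀ (h1 : blockIdx k r s < M) (h2 : blockIdx k r (s + 1) < M),
        (γ ⟨blockIdx k r (s + 1), h2⟩).re + (η - τ).re < (γ ⟨blockIdx k r s, h1⟩).re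

/-- `Λ₊ = max_s Re(ℓ_s η)`. -/
def Lam (η : ℂ) {N : ℕ} (ℓ : Fin N → ℂ) : ℝ := ⨆ s, (ℓ s * η).re

/-- the sector `Ã`. -/
def Atil (τ η ξp ξm : ℂ) {N : ℕ} (ℓ : Fin N → ℂ) : Set (Fin N → ℂ) :=
  {t | (∀ i j : Fin N, (j : ℕ) = (i : ℕ) + 1 → (t i - t j).re > 2 * Lam η ℓ + max η.re 0) ∧
       ∀ i : Fin N, (i : ℕ) = N - 1 →
         (t i).re > Lam η ℓ + max (max (η / 2).re 0) (max (-xiP τ η ξp).re (-xiM η ξm).re)}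

/-- the sector `Ã_τ`. -/
def AtilTau (τ η ξp ξm : ℂ) {N : ℕ} (ℓ : Fin N → ℂ) : Set (Fin N → ℂ) :=
  {t | (∀ i j : Fin N, (j : ℕ) = (i : ℕ) + 1 →
          (t i - t j).re > 2 * Lam η ℓ + max η.re 0 - τ.re) ∧
       ∀ i : Fin N, (i : ℕ) = N - 1 →
         (t i).re > Lam η ℓ + max (max (η / 2).re 0) (max (-xiP τ η ξp).re (-xiM η ξm).re) - τ.re}

/-- the cone `Q₊ ⊂ ℤ^N` spanned by the simple roots `e_i - e_{i+1}` and `e_N`. -/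
def Qplus {N : ℕ} : Set (Fin N → ℤ) :=
  {α | ∃ β : Fin N → ℕ, ∀ j : Fin N,
    α j = (β j : ℤ) -
      if _h : 0 < (j : ℕ) then
        (β ⟨(j : ℕ) - 1, lt_of_le_of_lt (Nat.sub_le _ _) j.isLt⟩ : ℤ)
      else 0}

/-- the cube `[0,π]^M` over which the contour integrals are iterated. -/
def box (M : ℕ) : Set (Fin M → ℝ) := Set.univ.pi fun _ => Set.Icc (0 : ℝ) Real.pi

/-- the point of the contour `C^γ_k(t)` with parameters `s ∈ [0,π]^M`. -/
def cpt {M N : ℕ} (k : Fin M → Fin N) (γ : Fin M → ℂ) (t : Fin N → ℂ) (s : Fin M → ℝ) :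
    Fin M → ℂ := fun i => t (k i) + γ i + (s i : ℂ) * I

/-- the iterated contour integral over `C^γ_k(t)`. -/
def contourIntegral {M N : ℕ} (k : Fin M → Fin N) (γ : Fin M → ℂ) (t : Fin N → ℂ)
    (f : (Fin M → ℂ) → ℂ) : ℂ :=
  I ^ M * ∫ s in box M, f (cpt k γ t s)

/-- nonvanishing of all denominators occurring in `w_k(x;t)/Φ_k(t)`. -/
def w0DenomOK (τ η ξp ξm : ℂ) {N M : ℕ} (ℓ : Fin N → ℂ) (k : Fin M → Fin N) (x : Fin M → ℂ)
    (t : Fin N → ℂ) : Prop :=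
  (∀ s : Fin N, ∀ i : Fin M,
      poch (qsq τ) (exp (-2 * (t s + x i + ℓ s * η))) ≠ 0 ∧
      poch (qsq τ) (exp (-2 * (t s - x i + ℓ s * η))) ≠ 0) ∧
  (∀ i : Fin M,
      poch (qsq τ) (exp (2 * (-xiP τ η ξp - x i))) ≠ 0 ∧
      poch (qsq τ) (exp (2 * (-xiM η ξm - x i))) ≠ 0) ∧
  (∀ i : Fin M, ∀ s : Fin N, k i ≤ s → theta (qsq τ) (exp (2 * (x i - t s + ℓ s * η))) ≠ 0) ∧
  ∀ i j : Fin M, i < j →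
      poch (qsq τ) (exp (-2 * (x i + x j - η))) ≠ 0 ∧
      poch (qsq τ) (exp (-2 * (x i - x j - η))) ≠ 0

/-- nonvanishing of the theta denominators of `Φ_k(t)`. -/
def PhiDenomOK (τ η ξp ξm : ℂ) {N M : ℕ} (ℓ : Fin N → ℂ) (k : Fin M → Fin N)
    (t : Fin N → ℂ) : Prop :=
  ∀ r, theta (qsq τ) (phiC η ξp ξm ℓ k r * exp (2 * t r)) ≠ 0

/-- nonvanishing of all sinh denominators occurring in `β_m(x;t)` (for any rearrangement `m`). -/
def betaDenomOK (η : ℂ) {N M : ℕ} (ℓ : Fin N → ℂ) (x : Fin M → ℂ) (t : Fin N → ℂ) : Prop :=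
  (∀ s : Fin N, ∀ i : Fin M,
      sinh (t s + x i - ℓ s * η) ≠ 0 ∧ sinh (t s - x i - ℓ s * η) ≠ 0) ∧
  ∀ i j : Fin M, i < j → sinh (x i + x j) ≠ 0 ∧ sinh (x i - x j) ≠ 0

/-!
Splitting off the first factor of each product gives `θ(p z) = -z⁻¹ θ(z)`. Hence, when `z` moves
to `z - τ`, the ratio `θ(e^{2(z + a)}) / θ(e^{2(z + b)})` picks up the factor `e^{2(a - b)}`, which
does not depend on `z`. Now `u_{k;i}(x;t)` is `e^{-t_{k_i}}` times a product of such ratios, one in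
each variable `x - t_s` with `s ≥ k_i`: shifting `t_r` affects nothing if `r < k_i`, and a single
ratio otherwise.
-/

theorem multipliable_one_sub_mul_pow {R : Type*} [NormedCommRing R] [NormOneClass R]
    [CompleteSpace R] {p : R} (hp : ‖p‖ < 1) (z : R) :
    Multipliable fun m : ℕ => 1 - z * p ^ m := by
  have hsum : Summable fun m : ℕ => ‖-(z * p ^ m)‖ := by
    simp only [norm_neg]
    exact ((summable_norm_geometric_of_norm_lt_one hp).mul_left ‖z‖).of_nonneg_of_le
      (fun _ => norm_nonneg _) fun _ => norm_mul_le _ _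
  simpa only [sub_eq_add_neg] using multipliable_one_add_of_summable hsum

theorem poch_eq_one_sub_mul_poch {p : ℂ} (hp : ‖p‖ < 1) (z : ℂ) :
    poch p z = (1 - z) * poch p (p * z) := by
  have hshift (m : ℕ) : 1 - z * p ^ (m + 1) = 1 - p * z * p ^ m := by ring
  have htail : Multipliable fun m : ℕ => 1 - z * p ^ (m + 1) := by
    simpa only [hshift] using multipliable_one_sub_mul_pow hp (p * z)
  rw [poch, tprod_eq_zero_mul' (f := fun m : ℕ => 1 - z * p ^ m) htail]
  simp only [poch, hshift, pow_zero, mul_one]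

theorem theta_eq_neg_mul_theta_mul {p z : ℂ} (hp : ‖p‖ < 1) (hp₀ : p ≠ 0) (hz : z ≠ 0) :
    theta p z = -z * theta p (p * z) := by
  have hinv : p * (p * z)⁻¹ = z⁻¹ := by field_simp
  rw [theta, theta, hinv, poch_eq_one_sub_mul_poch hp z, poch_eq_one_sub_mul_poch hp z⁻¹]
  field_simp
  ring

theorem norm_qsq_lt_one {τ : ℂ} (hτ : τ.re < 0) : ‖qsq τ‖ < 1 := by
  have hre : 2 * τ.re < 0 := mul_neg_of_pos_of_neg two_pos hτ
  simpa [qsq, norm_exp] using hre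

theorem theta_exp_sub {τ : ℂ} (hτ : τ.re < 0) (a : ℂ) :
    theta (qsq τ) (exp (2 * (a - τ))) = -exp (2 * (a - τ)) * theta (qsq τ) (exp (2 * a)) := by
  have hmul : qsq τ * exp (2 * (a - τ)) = exp (2 * a) := by
    rw [qsq, ← exp_add]
    ring_nf
  rw [theta_eq_neg_mul_theta_mul (norm_qsq_lt_one hτ) (exp_ne_zero _) (exp_ne_zero _), hmul]

/-- The ratio `θ(e^{2(z + a)}) / θ(e^{2(z + b)})`, the building block of `u_{k;i}`; it is `0` (by
division by zero) where the denominator vanishes. -/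
def thetaRatio (τ a b z : ℂ) : ℂ :=
  theta (qsq τ) (exp (2 * (z + a))) / theta (qsq τ) (exp (2 * (z + b)))

theorem thetaRatio_sub {τ : ℂ} (hτ : τ.re < 0) (a b z : ℂ) :
    thetaRatio τ a b (z - τ) = exp (2 * (a - b)) * thetaRatio τ a b z := by
  have hexp : -exp (2 * (z + a - τ)) / -exp (2 * (z + b - τ)) = exp (2 * (a - b)) := by
    rw [neg_div_neg_eq, ← exp_sub]
    ring_nf
  rw [thetaRatio, sub_add_eq_add_sub, sub_add_eq_add_sub, theta_exp_sub hτ, theta_exp_sub hτ,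
    mul_div_mul_comm, hexp, thetaRatio]

section ProdShift

variable {ι A R : Type*} [DecidableEq ι] [AddZeroClass A] [CommMonoid R] {S : Finset ι} {r : ι}

theorem prod_add_single_of_notMem (hr : r ∉ S) (f : ι → A → R) (t : ι → A) (a : A) :
    ∏ s ∈ S, f s ((t + Pi.single r a : ι → A) s) = ∏ s ∈ S, f s (t s) :=
  Finset.prod_congr rfl fun s hs => by
    rw [Pi.add_apply, Pi.single_eq_of_ne (ne_of_mem_of_not_mem hs hr), add_zero]

theorem prod_add_single_of_mem (hr : r ∈ S) {f : ι → A → R} {t : ι → A} {a : A} {c : R}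
    (hf : f r (t r + a) = c * f r (t r)) :
    ∏ s ∈ S, f s ((t + Pi.single r a : ι → A) s) = c * ∏ s ∈ S, f s (t s) := by
  rw [← Finset.mul_prod_erase S _ hr,
    prod_add_single_of_notMem (Finset.notMem_erase r S), Pi.add_apply, Pi.single_eq_same, hf,
    mul_assoc, Finset.mul_prod_erase S (fun s => f s (t s)) hr]

end ProdShift

section Ufun

variable {τ : ℂ} (η ξp ξm : ℂ) {M N : ℕ} (ℓ : Fin N → ℂ) (k : Fin M → Fin N) (i : Fin M)

theorem ufun_eq_prod_thetaRatio (x : ℂ) (t : Fin N → ℂ) :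
    ufun τ η ξp ξm ℓ k i x t =
      exp (-t (k i)) * thetaRatio τ (psiC τ η ξp ξm ℓ k i) (ℓ (k i) * η) (x - t (k i)) *
        ∏ s ∈ Finset.Ioi (k i), thetaRatio τ (-(ℓ s * η)) (ℓ s * η) (x - t s) := by
  simp only [ufun, thetaRatio, Finset.filter_lt_eq_Ioi, Finset.filter_le_eq_Ici,
    ← Finset.mul_prod_Ioi_eq_prod_Ici, Finset.prod_div_distrib, ← sub_eq_add_neg]
  rw [mul_div_mul_comm, mul_div_assoc]

theorem ufun_add_single_of_lt {r : Fin N} (hr : r < k i) (x : ℂ) (t : Fin N → ℂ) :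
    ufun τ η ξp ξm ℓ k i x (t + Pi.single r τ) = ufun τ η ξp ξm ℓ k i x t := by
  have hki : (t + Pi.single r τ : Fin N → ℂ) (k i) = t (k i) := by
    rw [Pi.add_apply, Pi.single_eq_of_ne hr.ne', add_zero]
  rw [ufun_eq_prod_thetaRatio, ufun_eq_prod_thetaRatio, hki,
    prod_add_single_of_notMem (by simpa using hr.le)
      fun s y => thetaRatio τ (-(ℓ s * η)) (ℓ s * η) (x - y)]

theorem two_mul_psiC_sub :
    2 * (psiC τ η ξp ξm ℓ k i - ℓ (k i) * η) - τ =
      2 * (ξp + ξm - η) +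
        4 * ((∑ s ∈ Finset.univ.filter fun s : Fin N => k i < s, ℓ s) - (M : ℂ) +
          ((i : ℕ) + 1)) * η := by
  rw [psiC, xiP, xiM]
  ring

theorem ufun_add_single_self (hτ : τ.re < 0) (x : ℂ) (t : Fin N → ℂ) :
    ufun τ η ξp ξm ℓ k i x (t + Pi.single (k i) τ) =
      exp (2 * (ξp + ξm - η) +
        4 * ((∑ s ∈ Finset.univ.filter fun s : Fin N => k i < s, ℓ s) - (M : ℂ) +
          ((i : ℕ) + 1)) * η) * ufun τ η ξp ξm ℓ k i x t := by
  have hki : (t + Pi.single (k i) τ : Fin N → ℂ) (k i) = t (k i) + τ := by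
    rw [Pi.add_apply, Pi.single_eq_same]
  rw [ufun_eq_prod_thetaRatio, ufun_eq_prod_thetaRatio, hki,
    prod_add_single_of_notMem Finset.notMem_Ioi_self
      fun s y => thetaRatio τ (-(ℓ s * η)) (ℓ s * η) (x - y),
    ← sub_sub, thetaRatio_sub hτ, ← two_mul_psiC_sub (τ := τ), neg_add, exp_add, exp_sub, exp_neg τ]
  ring

theorem ufun_add_single_of_gt (hτ : τ.re < 0) {r : Fin N} (hr : k i < r) (x : ℂ)
    (t : Fin N → ℂ) :
    ufun τ η ξp ξm ℓ k i x (t + Pi.single r τ) =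
      exp (-4 * ℓ r * η) * ufun τ η ξp ξm ℓ k i x t := by
  have hki : (t + Pi.single r τ : Fin N → ℂ) (k i) = t (k i) := by
    rw [Pi.add_apply, Pi.single_eq_of_ne hr.ne, add_zero]
  have hratio : thetaRatio τ (-(ℓ r * η)) (ℓ r * η) (x - (t r + τ)) =
      exp (-4 * ℓ r * η) * thetaRatio τ (-(ℓ r * η)) (ℓ r * η) (x - t r) := by
    rw [← sub_sub, thetaRatio_sub hτ]
    ring_nf
  rw [ufun_eq_prod_thetaRatio, ufun_eq_prod_thetaRatio, hki,
    prod_add_single_of_mem (Finset.mem_Ioi.2 hr)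
      (f := fun s y => thetaRatio τ (-(ℓ s * η)) (ℓ s * η) (x - y)) hratio, mul_left_comm]

end Ufun

theorem stmt9_general (τ η ξp ξm : ℂ) (hτ : τ.re < 0) {M N : ℕ}
    (ℓ : Fin N → ℂ) (k : Fin M → Fin N) (i : Fin M) (r : Fin N) (x : ℂ) (t : Fin N → ℂ)
    (h1 : ∀ s : Fin N, k i ≤ s → theta (qsq τ) (exp (2 * (x - t s + ℓ s * η))) ≠ 0) :
    ufun τ η ξp ξm ℓ k i x (fun s => t s + if s = r then τ else 0) =
      (if r < k i then 1
        else if r = k i then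
          exp (2 * (ξp + ξm - η) +
            4 * ((∑ s ∈ Finset.univ.filter fun s : Fin N => k i < s, ℓ s) - (M : ℂ) +
                ((i : ℕ) + 1)) * η)
        else exp (-4 * ℓ r * η)) *
        ufun τ η ξp ξm ℓ k i x t := by
  have hshift : (fun s => t s + if s = r then τ else 0) = t + Pi.single r τ := by
    ext s
    rw [Pi.add_apply, Pi.single_apply]
  rw [hshift]
  rcases lt_trichotomy r (k i) with hlt | rfl | hgt
  · rw [if_pos hlt, one_mul, ufun_add_single_of_lt η ξp ξm ℓ k i hlt]
  · rw [if_neg (lt_irrefl _), if_pos rfl, ufun_add_single_self η ξp ξm ℓ k i hτ]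
  · rw [if_neg hgt.not_gt, if_neg hgt.ne', ufun_add_single_of_gt η ξp ξm ℓ k i hτ hgt]

/-- functional equation for `u_{k;i}(x; t + τ e_r)`. -/
theorem stmt9 (τ η ξp ξm : ℂ) (hτ : τ.re < 0) (M N : ℕ) (hN : 1 ≤ N)
    (ℓ : Fin N → ℂ) (k : Fin M → Fin N) (hk : Monotone k) (i : Fin M) (r : Fin N)
    (x : ℂ) (t : Fin N → ℂ)
    (h1 : ∀ s : Fin N, k i ≤ s → theta (qsq τ) (exp (2 * (x - t s + ℓ s * η))) ≠ 0)
    (h2 : ∀ s : Fin N, k i ≤ s →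
      theta (qsq τ) (exp (2 * (x - (t s + if s = r then τ else 0) + ℓ s * η))) ≠ 0) :
    ufun τ η ξp ξm ℓ k i x (fun s => t s + if s = r then τ else 0) =
      (if r < k i then 1
        else if r = k i then
          exp (2 * (ξp + ξm - η) +
            4 * ((∑ s ∈ Finset.univ.filter fun s : Fin N => k i < s, ℓ s) - (M : ℂ) +
                ((i : ℕ) + 1)) * η)
        else exp (-4 * ℓ r * η)) *
        ufun τ η ξp ξm ℓ k i x t :=
  stmt9_general τ η ξp ξm hτ ℓ k i r x t h1

end BQKZ
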